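/- Let R be a commutative noetherian ring and let 0 → K → L → M → 0 be a short exact sequence of R-modules such that depth R_p ≤ width_{R_p} K_p for every prime ideal p of R. If sup { depth R_p − width_{R_p} L_p | p ∈ Spec(R) } = n for some integer n > 0, then sup { depth R_p − width_{R_p} M_p | p ∈ Spec(R) } = n. -/

import Mathlib

open CategoryTheory

universe u

/-- The depth of a module `N` over a commutative noetherian local ring `S`,
`inf { i | Ext^i_S(k, N) ≠ 0 }`, as an element of the extended (integer) line,
with `inf ∅ = ⊤`. -/
noncomputable def moduleDepth (S : Type u) [CommRing S] [IsLocalRing S]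
    (N : Type u) [AddCommGroup N] [Module S N] : EReal :=
  sInf {i : EReal | ∃ n : ℕ, i = ((n : ℝ) : EReal) ∧
    Nontrivial (((Ext S (ModuleCat S) n).obj
      (Opposite.op (ModuleCat.of S (IsLocalRing.ResidueField S)))).obj (ModuleCat.of S N))}

/-- The width of a module `N` over a commutative noetherian local ring `S`,
`inf { i | Tor_i^S(k, N) ≠ 0 }`, as an element of the extended (integer) line,
with `inf ∅ = ⊤`. -/
noncomputable def moduleWidth (S : Type u) [CommRing S] [IsLocalRing S]
    (N : Type u) [AddCommGroup N] [Module S N] : EReal :=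
  sInf {i : EReal | ∃ n : ℕ, i = ((n : ℝ) : EReal) ∧
    Nontrivial (((Tor (ModuleCat S) n).obj
      (ModuleCat.of S (IsLocalRing.ResidueField S))).obj (ModuleCat.of S N))}

namespace CategoryTheory

open Limits

variable {C D : Type*} [Category* C] [Abelian C] [Category* D] [Abelian D]

namespace ProjectiveResolution

/-- The augmentation of a projective resolution, as a morphism onto the resolved object. -/
noncomputable def augmentation {X : C} (P : ProjectiveResolution X) : P.complex.X 0 ⟶ X :=
  P.π.f 0

instance {X : C} (P : ProjectiveResolution X) : Epi P.augmentation :=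
  inferInstanceAs (Epi (P.π.f 0))

lemma d_comp_augmentation {X : C} (P : ProjectiveResolution X) :
    P.complex.d 1 0 ≫ P.augmentation = 0 :=
  P.complex_d_comp_π_f_zero

lemma exact_augmentation {X : C} (P : ProjectiveResolution X) :
    (ShortComplex.mk _ _ P.d_comp_augmentation).Exact :=
  P.exact₀

/-- Splicing a projective resolution of `K` with a short exact sequence `0 ⟶ K ⟶ P ⟶ X ⟶ 0`
where `P` is projective gives a projective resolution of `X`. -/
noncomputable def splice {S : ShortComplex C} (hS : S.ShortExact) [Projective S.X₂]
    (Q : ProjectiveResolution S.X₁) : ProjectiveResolution S.X₃ where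
  complex := Q.complex.augment (Q.augmentation ≫ S.f)
    (by rw [← Category.assoc, Q.d_comp_augmentation, zero_comp])
  projective n := by
    cases n
    · exact ‹Projective S.X₂›
    · exact Q.projective _
  π := (ChainComplex.toSingle₀Equiv _ _).symm ⟨S.g,
    (Category.assoc _ _ _).trans ((congrArg (Q.augmentation ≫ ·) S.zero).trans comp_zero)⟩
  quasiIso := ⟨fun n => by
    rcases n with _ | n
    · rw [ChainComplex.quasiIsoAt₀_iff, ShortComplex.quasiIso_iff_of_zeros' _ rfl rfl rfl]
      refine (ShortComplex.exact_and_epi_g_iff_of_iso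
        (S₂ := ShortComplex.mk (Q.augmentation ≫ S.f) S.g
          (by rw [Category.assoc, S.zero, comp_zero])) ?_).2 ⟨?_, hS.epi_g⟩
      · have h := ChainComplex.toSingle₀Equiv_symm_apply_f_zero
          (C := Q.complex.augment (Q.augmentation ≫ S.f)
            (by rw [← Category.assoc, Q.d_comp_augmentation, zero_comp])) (X := S.X₃) S.g
          ((Category.assoc _ _ _).trans
            ((congrArg (Q.augmentation ≫ ·) S.zero).trans comp_zero))
        exact ShortComplex.isoMk (Iso.refl _) (Iso.refl _) (Iso.refl _)
          ((Category.id_comp _).trans (Category.comp_id _).symm)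
          ((Category.id_comp S.g).trans (h.symm.trans (Category.comp_id _).symm))
      · let φ : ShortComplex.mk (Q.augmentation ≫ S.f) S.g
            (by rw [Category.assoc, S.zero, comp_zero]) ⟶ S :=
          { τ₁ := Q.augmentation
            τ₂ := 𝟙 _
            τ₃ := 𝟙 _ }
        have : Epi φ.τ₁ := inferInstanceAs (Epi (Q.augmentation))
        exact (ShortComplex.exact_iff_of_epi_of_isIso_of_mono φ).2 hS.exact
    · rw [quasiIsoAt_iff_exactAt' _ _ (ChainComplex.exactAt_succ_single_obj _ _),
        HomologicalComplex.exactAt_iff' _ (n + 2) (n + 1) n (by simp) (by simp)]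
      rcases n with _ | n
      · let φ : ShortComplex.mk (Q.complex.d 1 0) (Q.augmentation) Q.d_comp_augmentation ⟶
            ShortComplex.mk (Q.complex.d 1 0) (Q.augmentation ≫ S.f)
              (by rw [← Category.assoc, Q.d_comp_augmentation, zero_comp]) :=
          { τ₁ := 𝟙 _
            τ₂ := 𝟙 _
            τ₃ := S.f }
        have : Mono φ.τ₃ := hS.mono_f
        exact (ShortComplex.exact_iff_of_epi_of_isIso_of_mono φ).1 Q.exact_augmentation
      · exact Q.exact_succ n⟩

lemma isZero_leftDerived_succ_iff (F : C ⥤ D) [F.Additive] [HasProjectiveResolutions C]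
    {X : C} (P : ProjectiveResolution X) (n : ℕ) :
    IsZero ((F.leftDerived (n + 1)).obj X) ↔
      (ShortComplex.mk (F.map (P.complex.d (n + 2) (n + 1))) (F.map (P.complex.d (n + 1) n))
        (by simp [← F.map_comp])).Exact := by
  rw [(P.isoLeftDerivedObj F (n + 1)).isZero_iff]
  erw [← HomologicalComplex.exactAt_iff_isZero_homology]
  rw [HomologicalComplex.exactAt_iff' _ (n + 2) (n + 1) n (by simp) (by simp)]
  rfl

end ProjectiveResolution

lemma ShortComplex.Exact.exact_iff_mono_of_comp_eq {S : ShortComplex C} (hS : S.Exact) [Epi S.g]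
    {Z : C} {i : S.X₃ ⟶ Z} {k : S.X₂ ⟶ Z} (hk : S.g ≫ i = k) (w : S.f ≫ k = 0) :
    (ShortComplex.mk S.f k w).Exact ↔ Mono i := by
  let φ : S ⟶ ShortComplex.mk S.f k w :=
    { τ₁ := 𝟙 _
      τ₂ := 𝟙 _
      τ₃ := i }
  constructor
  · intro h
    refine Preadditive.mono_of_cancel_zero _ fun {A} y hy ↦ ?_
    obtain ⟨A', π, hπ, x, hx⟩ := surjective_up_to_refinements_of_epi S.g y
    obtain ⟨A'', π', hπ', z, hz⟩ := h.exact_up_to_refinements x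
      (show x ≫ k = 0 by rw [← hk, ← reassoc_of% hx, hy, comp_zero])
    rw [← cancel_epi π, ← cancel_epi π', hx, reassoc_of% hz]
    simp
  · intro h
    have : Mono φ.τ₃ := h
    exact (ShortComplex.exact_iff_of_epi_of_isIso_of_mono φ).1 hS

namespace ShortComplex.ShortExact

variable {S : ShortComplex C}

lemma exact_map (hS : S.ShortExact) (F : C ⥤ D) [F.Additive] [PreservesFiniteColimits F] :
    (S.map F).Exact := by
  have := hS.epi_g
  exact hS.exact.map_of_epi_of_preservesCokernel F inferInstance inferInstance

variable [EnoughProjectives C]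

/-- A short exact sequence `0 ⟶ X₁ ⟶ X₂ ⟶ X₃ ⟶ 0` and an epimorphism from a projective object
onto `X₂` with kernel `N` produce a short exact sequence `0 ⟶ N ⟶ W ⟶ X₁ ⟶ 0`, where `W` is
the kernel of the composite onto `X₃`. -/
lemma exists_syzygies (hS : S.ShortExact) :
    ∃ (P N W : C) (p : P ⟶ S.X₂) (j : W ⟶ P) (a : N ⟶ W) (b : W ⟶ S.X₁)
      (hp : (a ≫ j) ≫ p = 0) (hj : j ≫ p ≫ S.g = 0) (hab : a ≫ b = 0),
      Projective P ∧ (ShortComplex.mk (a ≫ j) p hp).ShortExact ∧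
      (ShortComplex.mk j (p ≫ S.g) hj).ShortExact ∧ (ShortComplex.mk a b hab).ShortExact ∧
      b ≫ S.f = j ≫ p := by
  have := hS.mono_f
  have := hS.epi_g
  let p := Projective.π S.X₂
  let j := kernel.ι (p ≫ S.g)
  let a : kernel p ⟶ kernel (p ≫ S.g) := kernel.lift _ (kernel.ι p) (by simp)
  have haj : a ≫ j = kernel.ι p := by simp [a, j]
  let b : kernel (p ≫ S.g) ⟶ S.X₁ := hS.exact.lift (j ≫ p) (by simp [j])
  have hb : b ≫ S.f = j ≫ p := hS.exact.lift_f _ _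
  have hab : a ≫ b = 0 := by
    rw [← cancel_mono S.f, Category.assoc, hb, reassoc_of% haj]
    simp
  have : Mono a := mono_of_mono_fac haj
  have : Epi b := by
    rw [epi_iff_surjective_up_to_refinements]
    intro A y
    obtain ⟨A', π, hπ, x, hx⟩ := surjective_up_to_refinements_of_epi p (y ≫ S.f)
    refine ⟨A', π, hπ, kernel.lift _ x ?_, ?_⟩
    · rw [← reassoc_of% hx, S.zero, comp_zero, comp_zero]
    · rw [← cancel_mono S.f, Category.assoc, Category.assoc, hb]
      simpa [j] using hx
  refine ⟨_, _, _, p, j, a, b, by rw [haj]; simp, by simp [j], hab, inferInstance, ?_, ?_, ?_, hb⟩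
  · have : Mono (a ≫ j) := inferInstance
    exact { exact := ShortComplex.exact_of_f_is_kernel _
              ((kernelIsKernel p).ofIsoLimit (Fork.ext (Iso.refl _) (by simp [haj]))) }
  · exact { exact := ShortComplex.exact_of_f_is_kernel _ (kernelIsKernel (p ≫ S.g)) }
  · refine { exact := ?_ }
    rw [ShortComplex.exact_iff_exact_up_to_refinements]
    intro A x hx
    refine ⟨A, 𝟙 A, inferInstance, kernel.lift p (x ≫ j) ?_, ?_⟩
    · rw [Category.assoc, ← hb]
      rw [reassoc_of% hx, zero_comp]
    · rw [← cancel_mono j]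
      simp [haj]

variable (F : C ⥤ D) [F.Additive]

lemma isZero_leftDerived_add_two_iff (hS : S.ShortExact) [Projective S.X₂] (n : ℕ) :
    IsZero ((F.leftDerived (n + 2)).obj S.X₃) ↔ IsZero ((F.leftDerived (n + 1)).obj S.X₁) := by
  let Q := projectiveResolution S.X₁
  rw [(Q.splice hS).isZero_leftDerived_succ_iff F, Q.isZero_leftDerived_succ_iff F]
  rfl

lemma isZero_leftDerived_X₃_of_forall {n : ℕ}
    (H : ∀ T : ShortComplex C, T.ShortExact → IsZero ((F.leftDerived (n + 1)).obj T.X₁) →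
      IsZero ((F.leftDerived (n + 1)).obj T.X₃) → IsZero ((F.leftDerived (n + 1)).obj T.X₂))
    (hS : S.ShortExact) (h₁ : IsZero ((F.leftDerived (n + 1)).obj S.X₁))
    (h₂ : IsZero ((F.leftDerived (n + 2)).obj S.X₂)) :
    IsZero ((F.leftDerived (n + 2)).obj S.X₃) := by
  obtain ⟨P, N, W, p, j, a, b, hp, hj, hab, hP, hi, hj', hab', hb⟩ := hS.exists_syzygies
  exact (hj'.isZero_leftDerived_add_two_iff F n).2
    (H _ hab' ((hi.isZero_leftDerived_add_two_iff F n).1 h₂) h₁)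

variable [PreservesFiniteColimits F]

lemma isZero_leftDerived_one_iff (hS : S.ShortExact) [Projective S.X₂] :
    IsZero ((F.leftDerived 1).obj S.X₃) ↔ Mono (F.map S.f) := by
  let Q := projectiveResolution S.X₁
  rw [(Q.splice hS).isZero_leftDerived_succ_iff F]
  let T := ShortComplex.mk (F.map (Q.complex.d 1 0)) (F.map Q.augmentation) (by
    rw [← F.map_comp, Q.d_comp_augmentation, F.map_zero])
  have hT : T.Exact :=
    Q.exact_augmentation.map_of_epi_of_preservesCokernel F inferInstance inferInstance
  have : Epi T.g := inferInstanceAs (Epi (F.map Q.augmentation))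
  exact hT.exact_iff_mono_of_comp_eq (F.map_comp Q.augmentation S.f).symm _

lemma mono_map_of_isZero_leftDerived_one (hS : S.ShortExact)
    (h : IsZero ((F.leftDerived 1).obj S.X₃)) : Mono (F.map S.f) := by
  obtain ⟨P, N, W, p, j, a, b, hp, hj, hab, hP, h₁, h₂, h₃, hb⟩ := hS.exists_syzygies
  have hj' : Mono (F.map j) := (h₂.isZero_leftDerived_one_iff F).1 h
  let φ : (ShortComplex.mk a b hab).map F ⟶ (ShortComplex.mk (a ≫ j) p hp).map F :=
    { τ₁ := 𝟙 _
      τ₂ := F.map j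
      τ₃ := F.map S.f
      comm₁₂ := (Category.id_comp _).trans (F.map_comp a j)
      comm₂₃ := (F.map_comp j p).symm.trans ((congrArg F.map hb.symm).trans (F.map_comp b S.f)) }
  have hb' : Epi b := h₃.epi_g
  exact ShortComplex.mono_of_epi_of_epi_of_mono φ (h₁.exact_map F)
    (inferInstanceAs (Epi (F.map b)))
    (inferInstanceAs (Epi (𝟙 _))) hj'

lemma isZero_leftDerived_one_of_mono (hS : S.ShortExact)
    (h : IsZero ((F.leftDerived 1).obj S.X₂)) (hf : Mono (F.map S.f)) :
    IsZero ((F.leftDerived 1).obj S.X₃) := by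
  obtain ⟨P, N, W, p, j, a, b, hp, hj, hab, hP, h₁, h₂, h₃, hb⟩ := hS.exists_syzygies
  refine (h₂.isZero_leftDerived_one_iff F).2 ?_
  have : Mono (F.map (a ≫ j)) := (h₁.isZero_leftDerived_one_iff F).1 h
  let φ : (ShortComplex.mk a b hab).map F ⟶ (ShortComplex.mk (a ≫ j) p hp).map F :=
    { τ₁ := 𝟙 _
      τ₂ := F.map j
      τ₃ := F.map S.f
      comm₁₂ := (Category.id_comp _).trans (F.map_comp a j)
      comm₂₃ := (F.map_comp j p).symm.trans ((congrArg F.map hb.symm).trans (F.map_comp b S.f)) }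
  exact ShortComplex.mono_of_mono_of_mono_of_mono φ (h₃.exact_map F) this
    (inferInstanceAs (Mono (𝟙 _))) hf

lemma isZero_leftDerived_zero_X₃ (hS : S.ShortExact)
    (h : IsZero ((F.leftDerived 0).obj S.X₂)) : IsZero ((F.leftDerived 0).obj S.X₃) := by
  rw [(F.leftDerivedZeroIsoSelf.app _).isZero_iff] at h ⊢
  have := hS.epi_g
  exact h.of_epi (F.map S.g)

lemma isZero_leftDerived_zero_X₂ (hS : S.ShortExact)
    (h₁ : IsZero ((F.leftDerived 0).obj S.X₁)) (h₃ : IsZero ((F.leftDerived 0).obj S.X₃)) :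
    IsZero ((F.leftDerived 0).obj S.X₂) := by
  rw [(F.leftDerivedZeroIsoSelf.app _).isZero_iff] at h₁ h₃ ⊢
  exact (hS.exact_map F).isZero_of_both_zeros (h₁.eq_of_src _ _) (h₃.eq_of_tgt _ _)

lemma isZero_leftDerived_one_X₂ (hS : S.ShortExact)
    (h₁ : IsZero ((F.leftDerived 1).obj S.X₁)) (h₃ : IsZero ((F.leftDerived 1).obj S.X₃)) :
    IsZero ((F.leftDerived 1).obj S.X₂) := by
  obtain ⟨P, N, W, p, j, a, b, hp, hj, hab, hP, hi, hj', hab', hb⟩ := hS.exists_syzygies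
  refine (hi.isZero_leftDerived_one_iff F).2 ?_
  have : Mono (F.map j) := (hj'.isZero_leftDerived_one_iff F).1 h₃
  have : Mono (F.map a) := hab'.mono_map_of_isZero_leftDerived_one F h₁
  dsimp only
  rw [F.map_comp]
  infer_instance

lemma isZero_leftDerived_one_X₃ (hS : S.ShortExact)
    (h₁ : IsZero ((F.leftDerived 0).obj S.X₁)) (h₂ : IsZero ((F.leftDerived 1).obj S.X₂)) :
    IsZero ((F.leftDerived 1).obj S.X₃) := by
  rw [(F.leftDerivedZeroIsoSelf.app _).isZero_iff] at h₁
  exact hS.isZero_leftDerived_one_of_mono F h₂ ⟨fun _ _ _ ↦ h₁.eq_of_tgt _ _⟩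

lemma isZero_leftDerived_X₂ (n : ℕ) {S : ShortComplex C} (hS : S.ShortExact)
    (h₁ : IsZero ((F.leftDerived n).obj S.X₁)) (h₃ : IsZero ((F.leftDerived n).obj S.X₃)) :
    IsZero ((F.leftDerived n).obj S.X₂) := by
  induction n using Nat.strong_induction_on generalizing S with | _ n ih
  match n with
  | 0 => exact hS.isZero_leftDerived_zero_X₂ F h₁ h₃
  | 1 => exact hS.isZero_leftDerived_one_X₂ F h₁ h₃
  | n + 2 =>
    obtain ⟨P, N, W, p, j, a, b, hp, hj, hab, hP, hi, hj', hab', hb⟩ := hS.exists_syzygies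
    have hW := (hj'.isZero_leftDerived_add_two_iff F n).1 h₃
    refine (hi.isZero_leftDerived_add_two_iff F n).2 ?_
    obtain ⟨P', N', W', p', j', a', b', hp', hj'', hab'', hP', hi', hk, hab₂, hb'⟩ :=
      hab'.exists_syzygies
    have hW' := (hk.isZero_leftDerived_add_two_iff F n).1 h₁
    match n with
    | 0 =>
      refine hab₂.isZero_leftDerived_one_of_mono F hW' ?_
      have := (hi'.isZero_leftDerived_one_iff F).1 hW
      dsimp only at this
      rw [F.map_comp] at this
      exact mono_of_mono _ (F.map j')
    | n + 1 =>
      exact hab₂.isZero_leftDerived_X₃_of_forall F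
        (fun T hT hT₁ hT₃ ↦ ih (n + 1) (by lia) hT hT₁ hT₃)
        ((hi'.isZero_leftDerived_add_two_iff F n).1 hW) hW'

lemma isZero_leftDerived_X₃ (n : ℕ) (hS : S.ShortExact)
    (h₁ : IsZero ((F.leftDerived n).obj S.X₁)) (h₂ : IsZero ((F.leftDerived (n + 1)).obj S.X₂)) :
    IsZero ((F.leftDerived (n + 1)).obj S.X₃) := by
  cases n with
  | zero => exact hS.isZero_leftDerived_one_X₃ F h₁ h₂
  | succ n =>
    exact hS.isZero_leftDerived_X₃_of_forall F
      (fun T hT hT₁ hT₃ ↦ hT.isZero_leftDerived_X₂ F (n + 1) hT₁ hT₃) h₁ h₂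

lemma isZero_leftDerived_X₂_iff_X₃ (n : ℕ) (hS : S.ShortExact)
    (h : ∀ i ≤ n, IsZero ((F.leftDerived i).obj S.X₁)) :
    IsZero ((F.leftDerived n).obj S.X₂) ↔ IsZero ((F.leftDerived n).obj S.X₃) := by
  refine ⟨fun h₂ ↦ ?_, hS.isZero_leftDerived_X₂ F n (h n le_rfl)⟩
  cases n with
  | zero => exact hS.isZero_leftDerived_zero_X₃ F h₂
  | succ n => exact hS.isZero_leftDerived_X₃ F n (h n n.le_succ) h₂

end ShortComplex.ShortExact

end CategoryTheory

lemma moduleWidth_le_of_not_isZero {S : Type u} [CommRing S] [IsLocalRing S] {N : Type u}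
    [AddCommGroup N] [Module S N] {n : ℕ}
    (h : ¬ Limits.IsZero (((Tor (ModuleCat S) n).obj
      (ModuleCat.of S (IsLocalRing.ResidueField S))).obj (ModuleCat.of S N))) :
    moduleWidth S N ≤ ((n : ℝ) : EReal) :=
  sInf_le ⟨n, rfl, not_subsingleton_iff_nontrivial.1
    (mt ModuleCat.isZero_iff_subsingleton.2 h)⟩

lemma le_moduleWidth_iff {S : Type u} [CommRing S] [IsLocalRing S] {N : Type u}
    [AddCommGroup N] [Module S N] {d : EReal} :
    d ≤ moduleWidth S N ↔ ∀ n : ℕ, ((n : ℝ) : EReal) < d →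
      Limits.IsZero (((Tor (ModuleCat S) n).obj
        (ModuleCat.of S (IsLocalRing.ResidueField S))).obj (ModuleCat.of S N)) := by
  refine ⟨fun h n hn ↦ ?_, fun h ↦ le_sInf ?_⟩
  · by_contra hN
    exact ((moduleWidth_le_of_not_isZero hN).trans_lt hn).not_ge h
  · rintro _ ⟨n, rfl, hN⟩
    by_contra! hn
    exact not_subsingleton_iff_nontrivial.2 hN (ModuleCat.isZero_iff_subsingleton.1 (h n hn))

lemma min_moduleWidth_eq_of_exact {S : Type u} [CommRing S] [IsLocalRing S] {K L M : Type u}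
    [AddCommGroup K] [AddCommGroup L] [AddCommGroup M] [Module S K] [Module S L] [Module S M]
    {f : K →ₗ[S] L} {g : L →ₗ[S] M} (hf : Function.Injective f) (hg : Function.Surjective g)
    (hfg : Function.Exact f g) {d : EReal} (hd : d ≤ moduleWidth S K) :
    min d (moduleWidth S L) = min d (moduleWidth S M) := by
  let T : ShortComplex (ModuleCat S) :=
    ShortComplex.mk (ModuleCat.ofHom f) (ModuleCat.ofHom g) (by
      ext x
      exact hfg.apply_apply_eq_zero x)
  have hT : T.ShortExact := ModuleCat.shortComplex_shortExact T hfg hf hg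
  let F : ModuleCat S ⥤ ModuleCat S :=
    (MonoidalCategory.tensoringLeft (ModuleCat S)).obj
      (ModuleCat.of S (IsLocalRing.ResidueField S))
  have : Limits.PreservesFiniteColimits F :=
    inferInstanceAs (Limits.PreservesFiniteColimits (MonoidalCategory.tensorLeft
      (ModuleCat.of S (IsLocalRing.ResidueField S))))
  have key (n : ℕ) (hn : ((n : ℝ) : EReal) < d) :=
    hT.isZero_leftDerived_X₂_iff_X₃ F n fun i hi ↦ le_moduleWidth_iff.1 hd i
      (lt_of_le_of_lt (by exact_mod_cast hi) hn)
  refine le_antisymm (le_min (min_le_left _ _) ?_) (le_min (min_le_left _ _) ?_)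
  · refine le_moduleWidth_iff.2 fun n hn ↦ ?_
    obtain ⟨hn, hn'⟩ := lt_min_iff.1 hn
    exact (key n hn).1 (le_moduleWidth_iff.1 le_rfl n hn')
  · refine le_moduleWidth_iff.2 fun n hn ↦ ?_
    obtain ⟨hn, hn'⟩ := lt_min_iff.1 hn
    exact (key n hn).2 (le_moduleWidth_iff.1 le_rfl n hn')

lemma EReal.sub_le_max_sub_of_min_eq {d a b : EReal} (h : min d a = min d b) :
    d - a ≤ max 0 (d - b) := by
  rcases le_or_gt d a with hda | had
  · exact le_max_of_le_left (EReal.sub_nonpos.2 hda)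
  · rw [min_eq_right had.le] at h
    have hb : a = b := by
      rcases min_choice d b with h' | h'
      · exact absurd (h.trans h') had.ne
      · exact h.trans h'
    rw [hb]
    exact le_max_right _ _

/-- Let `R` be a commutative noetherian ring and `0 → K → L → M → 0` a short exact
sequence of `R`-modules such that `depth R_p ≤ width_{R_p} K_p` for every prime `p`.
If `sup { depth R_p − width_{R_p} L_p | p ∈ Spec R } = n` for some integer `n > 0`,
then `sup { depth R_p − width_{R_p} M_p | p ∈ Spec R } = n`. -/
theorem sup_depth_sub_width_eq_of_shortExact
    (R : Type u) [CommRing R] [IsNoetherianRing R]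
    (K L M : Type u) [AddCommGroup K] [AddCommGroup L] [AddCommGroup M]
    [Module R K] [Module R L] [Module R M]
    (f : K →ₗ[R] L) (g : L →ₗ[R] M)
    (hf : Function.Injective f) (hg : Function.Surjective g)
    (hfg : Function.Exact f g)
    (hK : ∀ p : PrimeSpectrum R,
      moduleDepth (Localization.AtPrime p.asIdeal) (Localization.AtPrime p.asIdeal) ≤
        moduleWidth (Localization.AtPrime p.asIdeal)
          (LocalizedModule p.asIdeal.primeCompl K))
    (n : ℤ) (hn : 0 < n)
    (hL : (⨆ p : PrimeSpectrum R,
        moduleDepth (Localization.AtPrime p.asIdeal) (Localization.AtPrime p.asIdeal) -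
          moduleWidth (Localization.AtPrime p.asIdeal)
            (LocalizedModule p.asIdeal.primeCompl L)) = ((n : ℝ) : EReal)) :
    (⨆ p : PrimeSpectrum R,
        moduleDepth (Localization.AtPrime p.asIdeal) (Localization.AtPrime p.asIdeal) -
          moduleWidth (Localization.AtPrime p.asIdeal)
            (LocalizedModule p.asIdeal.primeCompl M)) = ((n : ℝ) : EReal) := by
  have key (p : PrimeSpectrum R) := min_moduleWidth_eq_of_exact
    (LocalizedModule.map_injective p.asIdeal.primeCompl f hf)
    (LocalizedModule.map_surjective p.asIdeal.primeCompl g hg)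
    (LocalizedModule.map_exact p.asIdeal.primeCompl f g hfg) (hK p)
  have hn' : (0 : EReal) < ((n : ℝ) : EReal) := by exact_mod_cast hn
  apply le_antisymm
  · refine iSup_le fun p ↦ (EReal.sub_le_max_sub_of_min_eq (key p).symm).trans ?_
    exact max_le hn'.le (hL ▸ le_iSup_of_le p le_rfl)
  · refine (le_max_iff.1 ?_).resolve_left hn'.not_ge
    rw [← hL]
    exact iSup_le fun p ↦ (EReal.sub_le_max_sub_of_min_eq (key p)).trans
      (max_le_max le_rfl (le_iSup_of_le p le_rfl))
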